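/- Let k ≥ 2 be an integer and let S ⊆ ℕ be a k-automatic set with gcd(S) = 1 such that a deterministic finite automaton with m states accepts the language of base-k expansions of the elements of S. Then there exist distinct integers s_1, s_2, …, s_ℓ ∈ S, all less than k^{2m+2}, such that gcd(s_1, s_2, …, s_ℓ) = 1; equivalently, the gcd of the elements of S that are less than k^{2m+2} equals 1. -/

import Mathlib

/-- `n` can be written as a sum of at least one and at most `N` elements of `S`
(repetitions allowed). -/
def SumOfAtMost (S : Set ℕ) (N n : ℕ) : Prop :=
  ∃ l : List ℕ, l ≠ [] ∧ l.length ≤ N ∧ (∀ x ∈ l, x ∈ S) ∧ l.sum = n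

/-- `π_S(x) = #{n ≤ x : n ∈ S}`. -/
noncomputable def piCount (S : Set ℕ) (x : ℕ) : ℕ :=
  Set.ncard {n | n ∈ S ∧ n ≤ x}

/-- `S` is sparse if `π_S(x) = O((log x)^d)` for some natural number `d`. -/
def IsSparse (S : Set ℕ) : Prop :=
  ∃ d : ℕ, ∃ C : ℝ, 0 < C ∧ ∃ x0 : ℕ, ∀ x : ℕ, x0 ≤ x →
    (piCount S x : ℝ) ≤ C * (Real.log x) ^ d

/-- `S ⊆ ℕ` is `k`-automatic: some DFA over the alphabet `{0, …, k-1}` accepts exactly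
the base-`k` expansions (least-significant digit first, without leading zeros)
of the elements of `S`. -/
def IsKAutomatic (k : ℕ) (S : Set ℕ) : Prop :=
  ∃ (m : ℕ) (M : DFA (Fin k) (Fin m)),
    ∀ w : List (Fin k), w ∈ M.accepts ↔ ∃ s ∈ S, w.map Fin.val = Nat.digits k s

/-!
The gcd of the small elements of `S` is `1` unless some prime `p` divides all of them. Over
`ZMod p`, the series sending an accepted word to its value and every other word to `0` has a linear
representation of dimension `2m`: the value of `x ++ y` is affine in that of `y`, with two
coefficients depending on `x`, so these and the state reached by `x` determine the series on the
words extending `x`. A series with a representation of dimension `N` that vanishes on all words of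
length `< N` vanishes identically, so `p` would divide every element of `S`.
-/

section HankelFactorization

variable {α K V W : Type*} [DivisionRing K] [AddCommGroup V] [Module K V] [FiniteDimensional K V]
  [AddCommMonoid W] [Module K W]

lemma exists_le_finrank_mem_span_image_Iio (v : ℕ → V) :
    ∃ n ≤ Module.finrank K V, v n ∈ Submodule.span K (v '' Set.Iio n) := by
  by_contra! hnotMem
  have hindep : ∀ n ≤ Module.finrank K V + 1, LinearIndepOn K v (Set.Iio n) := by
    intro n hn
    induction n with
    | zero => simp
    | succ n ih =>
      rw [← Order.succ_eq_add_one, Order.Iio_succ_eq_insert]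
      exact (ih (by lia)).insert (hnotMem n (by lia))
  have hcard := (hindep _ le_rfl).fintype_card_le_finrank
  rw [Fintype.card_Iio, Nat.card_Iio] at hcard
  lia

-- Some prefix `w.take n` has its vector in the span of those of the shorter prefixes, so `f w` is
-- a combination of the values of `f` on the shorter words `w.take i ++ w.drop n` with `i < n`.
theorem eq_zero_of_forall_length_lt_finrank {f : List α → W}
    (v : List α → V) (φ : List α → V →ₗ[K] W) (hf : ∀ x y, f (x ++ y) = φ y (v x))
    (hshort : ∀ w : List α, w.length < Module.finrank K V → f w = 0) (w : List α) : f w = 0 := by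
  induction hw : w.length using Nat.strong_induction_on generalizing w with
  | _ l ih =>
  subst hw
  obtain hlt | hle := lt_or_ge w.length (Module.finrank K V)
  · exact hshort w hlt
  obtain ⟨n, hn, hspan⟩ := exists_le_finrank_mem_span_image_Iio (K := K) fun i ↦ v (w.take i)
  have hker : Submodule.span K ((fun i ↦ v (w.take i)) '' Set.Iio n) ≤
      LinearMap.ker (φ (w.drop n)) := by
    rw [Submodule.span_le]
    rintro _ ⟨i, hi : i < n, rfl⟩
    rw [SetLike.mem_coe, LinearMap.mem_ker, ← hf]
    refine ih _ ?_ _ rfl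
    simp only [List.length_append, List.length_take, List.length_drop]
    lia
  rw [← List.take_append_drop n w, hf]
  exact hker hspan

end HankelFactorization

section BaseExpansion

variable {k : ℕ}

/-- The number written by the word `w` of base-`k` digits, least significant digit first. Any word
is allowed, so a number has many representations, differing by zeros at the end. -/
def wordValue (w : List (Fin k)) : ℕ :=
  Nat.ofDigits k (w.map Fin.val)

lemma wordValue_append (x y : List (Fin k)) :
    wordValue (x ++ y) = wordValue x + k ^ x.length * wordValue y := by
  simp [wordValue, Nat.ofDigits_append]

lemma wordValue_lt_pow_length (hk : 1 < k) (w : List (Fin k)) : wordValue w < k ^ w.length := by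
  simpa [wordValue] using
    Nat.ofDigits_lt_base_pow_length (l := w.map Fin.val) hk (by simp)

lemma exists_map_val_eq_digits (hk : 1 < k) (n : ℕ) :
    ∃ w : List (Fin k), w.map Fin.val = Nat.digits k n := by
  rw [← Set.mem_range, Set.range_list_map]
  exact fun d hd ↦ ⟨⟨d, Nat.digits_lt_base hk hd⟩, rfl⟩

lemma mem_iff_exists_wordValue_eq (hk : 1 < k) {S : Set ℕ} {L : Language (Fin k)}
    (hL : ∀ w : List (Fin k), w ∈ L ↔ ∃ s ∈ S, w.map Fin.val = Nat.digits k s) (n : ℕ) :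
    n ∈ S ↔ ∃ w ∈ L, wordValue w = n := by
  constructor
  · intro hn
    obtain ⟨w, hw⟩ := exists_map_val_eq_digits hk n
    exact ⟨w, (hL w).2 ⟨n, hn, hw⟩, by rw [wordValue, hw, Nat.ofDigits_digits]⟩
  · rintro ⟨w, hw, rfl⟩
    obtain ⟨s, hs, hws⟩ := (hL w).1 hw
    rwa [wordValue, hws, Nat.ofDigits_digits]

end BaseExpansion

section AcceptedValue

variable {k : ℕ} {σ : Type*} (M : DFA (Fin k) σ) (K : Type*)

open Classical in
/-- The formal power series over `K` whose coefficient at a word accepted by `M` is the number this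
word writes in base `k`, and whose other coefficients vanish. -/
noncomputable def acceptedValue [Semiring K] (w : List (Fin k)) : K :=
  if w ∈ M.accepts then (wordValue w : K) else 0

open Classical in
/-- The state vector of the prefix `x`: a copy of `K × K` for each state of `M`, where the one at
the state reached by `x` holds the two numbers through which `x` enters `wordValue (x ++ y)`. -/
noncomputable def prefixVector [Semiring K] (x : List (Fin k)) : σ → K × K :=
  Pi.single (M.eval x) ((wordValue x : K), (k : K) ^ x.length)

open Classical in
/-- The functional on state vectors that evaluates `acceptedValue` after reading the suffix `y`. -/
noncomputable def suffixFunctional [CommSemiring K] [Fintype σ] (y : List (Fin k)) :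
    Module.Dual K (σ → K × K) :=
  LinearMap.lsum K (fun _ ↦ K × K) K fun q ↦
    if M.evalFrom q y ∈ M.accept then
      LinearMap.fst K K K + (wordValue y : K) • LinearMap.snd K K K
    else 0

lemma acceptedValue_zmod_eq_zero_iff {p : ℕ} {w : List (Fin k)} :
    acceptedValue M (ZMod p) w = 0 ↔ (w ∈ M.accepts → p ∣ wordValue w) := by
  classical
  rw [acceptedValue, ite_eq_right_iff, ZMod.natCast_eq_zero_iff]

variable [Fintype σ]

lemma acceptedValue_append [CommSemiring K] (x y : List (Fin k)) :
    acceptedValue M K (x ++ y) = suffixFunctional M K y (prefixVector M K x) := by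
  classical
  have haccept : x ++ y ∈ M.accepts ↔ M.evalFrom (M.eval x) y ∈ M.accept := by
    rw [DFA.mem_accepts, DFA.eval, DFA.evalFrom_of_append]
  rw [suffixFunctional, prefixVector, LinearMap.lsum_piSingle, acceptedValue]
  simp only [haccept]
  split_ifs
  · simp [wordValue_append, mul_comm]
  · rfl

lemma dvd_wordValue_of_forall_length_lt {p : ℕ} (hp : p.Prime)
    (hshort : ∀ w ∈ M.accepts, w.length < 2 * Fintype.card σ → p ∣ wordValue w) :
    ∀ w ∈ M.accepts, p ∣ wordValue w := by
  have : Fact p.Prime := ⟨hp⟩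
  have hdim : Module.finrank (ZMod p) (σ → ZMod p × ZMod p) = 2 * Fintype.card σ := by
    simp [Module.finrank_pi_fintype, mul_comm]
  have hzero : ∀ w, acceptedValue M (ZMod p) w = 0 := by
    refine eq_zero_of_forall_length_lt_finrank (prefixVector M (ZMod p))
      (suffixFunctional M (ZMod p)) (acceptedValue_append M (ZMod p)) fun w hw ↦ ?_
    rw [hdim] at hw
    exact (acceptedValue_zmod_eq_zero_iff M).2 fun hacc ↦ hshort w hacc hw
  exact fun w ↦ (acceptedValue_zmod_eq_zero_iff M).1 (hzero w)

theorem gcd_one_small_witnesses_general (hk : 1 < k) {S : Set ℕ}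
    (hS : ∀ n, n ∈ S ↔ ∃ w ∈ M.accepts, wordValue w = n)
    (hgcd : ∀ d : ℕ, (∀ n ∈ S, d ∣ n) → d = 1) :
    ∃ F : Finset ℕ, ↑F ⊆ S ∧ (∀ x ∈ F, x < k ^ (2 * Fintype.card σ - 1)) ∧ F.gcd id = 1 := by
  classical
  let F := (Finset.range (k ^ (2 * Fintype.card σ - 1))).filter (· ∈ S)
  refine ⟨F, fun x hx ↦ (Finset.mem_filter.1 hx).2,
    fun x hx ↦ Finset.mem_range.1 (Finset.mem_filter.1 hx).1, ?_⟩
  by_contra hne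
  obtain ⟨p, hp, hpF⟩ := Nat.exists_prime_and_dvd hne
  have hshort : ∀ w ∈ M.accepts, w.length < 2 * Fintype.card σ → p ∣ wordValue w := by
    intro w hw hlen
    have hlt : wordValue w < k ^ (2 * Fintype.card σ - 1) :=
      (wordValue_lt_pow_length hk w).trans_le (Nat.pow_le_pow_right hk.le (by lia))
    have hmem : wordValue w ∈ F := by simpa [F, hlt] using (hS _).2 ⟨w, hw, rfl⟩
    exact hpF.trans (Finset.gcd_dvd hmem)
  refine hp.ne_one (hgcd p fun n hn ↦ ?_)
  obtain ⟨w, hw, rfl⟩ := (hS n).1 hn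
  exact dvd_wordValue_of_forall_length_lt M hp hshort w hw

end AcceptedValue

/-- If `S` is a `k`-automatic set with `gcd(S) = 1` accepted (via base-`k` expansions)
by a DFA with `m` states, then there are finitely many distinct elements of `S`, all
less than `k^(2m+2)`, whose gcd is `1`. -/
theorem gcd_one_small_witnesses
    (k m : ℕ) (hk : 2 ≤ k) (S : Set ℕ)
    (hgcd : ∀ d : ℕ, (∀ n ∈ S, d ∣ n) → d = 1)
    (M : DFA (Fin k) (Fin m))
    (hM : ∀ w : List (Fin k), w ∈ M.accepts ↔ ∃ s ∈ S, w.map Fin.val = Nat.digits k s) :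
    ∃ F : Finset ℕ, ↑F ⊆ S ∧ (∀ x ∈ F, x < k ^ (2 * m + 2)) ∧ F.gcd id = 1 := by
  obtain ⟨F, hFS, hlt, hF⟩ :=
    gcd_one_small_witnesses_general M hk (mem_iff_exists_wordValue_eq hk hM) hgcd
  rw [Fintype.card_fin] at hlt
  exact ⟨F, hFS, fun x hx ↦ (hlt x hx).trans_le (Nat.pow_le_pow_right (by lia) (by lia)), hF⟩
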